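/- Let n ≥ 3 and let D_n = ⟨x, y | x² = y² = (xy)ⁿ = 1⟩ be the dihedral group of order 2n. Then every irreducible representation ρ: D_n → PSL₂(ℂ) is conjugate to one with image in N (the classes of matrices that are diagonal or have zero diagonal), and up to conjugation there are exactly ⌊n/2⌋ irreducible representations D_n → PSL₂(ℂ) (equivalently, ⌊n/2⌋ irreducible PSL₂(ℂ)-characters of D_n), distinguished by the value trace²(ρ(xy)) = 4cos²(πk/n), 1 ≤ k ≤ ⌊n/2⌋, gcd with n giving order n/gcd(k,n) of ρ(xy). -/

import Mathlib

noncomputable section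

abbrev SL2C := Matrix.SpecialLinearGroup (Fin 2) ℂ

/-- `PSL₂(ℂ) = SL₂(ℂ)/{±I}`. -/
abbrev PSL2C := SL2C ⧸ Subgroup.center SL2C

/-- An element of `PSL₂(ℂ)` is diagonal if it is the class of a diagonal matrix. -/
def IsDiagClass (g : PSL2C) : Prop :=
  ∃ A : SL2C, (QuotientGroup.mk A : PSL2C) = g ∧ A.1 0 1 = 0 ∧ A.1 1 0 = 0

/-- An element of `PSL₂(ℂ)` is the class of a matrix with both diagonal entries `0`. -/
def IsAntiDiagClass (g : PSL2C) : Prop :=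
  ∃ A : SL2C, (QuotientGroup.mk A : PSL2C) = g ∧ A.1 0 0 = 0 ∧ A.1 1 1 = 0

/-- Membership in `N ⊂ PSL₂(ℂ)`: the class of a diagonal or antidiagonal matrix. -/
def MemN (g : PSL2C) : Prop := IsDiagClass g ∨ IsAntiDiagClass g

/-- A representation `ρ : D_n → PSL₂(ℂ)` is reducible if all the elements of its image
have a common eigenvector (fixed point on `ℂP¹`); irreducible means not reducible. -/
def IsRedRep {n : ℕ} (ρ : DihedralGroup n →* PSL2C) : Prop :=
  ∃ v : Fin 2 → ℂ, v ≠ 0 ∧ ∀ g : DihedralGroup n, ∃ (A : SL2C) (cc : ℂ),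
    (QuotientGroup.mk A : PSL2C) = ρ g ∧ A.1.mulVec v = cc • v

/-- Two representations are conjugate if they differ by conjugation by an element of
`PSL₂(ℂ)`. -/
def RepConj {n : ℕ} (ρ σ : DihedralGroup n →* PSL2C) : Prop :=
  ∃ u : PSL2C, ∀ g, σ g = u * ρ g * u⁻¹

/-!
Over an algebraically closed field, the image of the rotation `r` fixes a point `p` of `ℙ¹`. The
reflection `s` inverts `r`, so `s p` is fixed by `r` as well, and irreducibility forces `s p ≠ p`.
As `PSL₂` is two-transitive on `ℙ¹`, we may assume `p = ∞` and `s p = 0`. Then `r` acts as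
`diag(z, z⁻¹)`, while `s` swaps `∞` and `0` and becomes the Weyl element after a conjugation by a
diagonal matrix. What remains is the `n`-th root of unity `w = z² ≠ 1`, and conjugation by the Weyl
element exchanges `w` and `w⁻¹`. The pair `{w, w⁻¹}` is recovered from the squared trace
`w + w⁻¹ + 2`, and there are `⌊n/2⌋` such pairs.
-/

open MulAction
open scoped MatrixGroups LinearAlgebra.Projectivization Pointwise

section Homomorphisms

variable {G H : Type*} [Group G] [Group H]

/-- Two homomorphisms are conjugate if they differ by an inner automorphism of the target. -/
def IsConjHom (ρ σ : G →* H) : Prop :=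
  ∃ u : H, ∀ g, σ g = u * ρ g * u⁻¹

theorem isConjHom_conj_comp (u : H) (ρ : G →* H) :
    IsConjHom ρ ((MulAut.conj u).toMonoidHom.comp ρ) :=
  ⟨u, fun _ => rfl⟩

theorem IsConjHom.symm {ρ σ : G →* H} : IsConjHom ρ σ → IsConjHom σ ρ := by
  rintro ⟨u, hu⟩
  exact ⟨u⁻¹, fun g => by simp [hu, mul_assoc]⟩

theorem IsConjHom.trans {ρ σ τ : G →* H} : IsConjHom ρ σ → IsConjHom σ τ → IsConjHom ρ τ := by
  rintro ⟨u, hu⟩ ⟨v, hv⟩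
  exact ⟨v * u, fun g => by simp [hu, hv, mul_assoc]⟩

/-- The action of `G` on `X` through `ρ` has a global fixed point. For `X = ℂP¹` this is
reducibility of a representation `ρ` into `PSL₂(ℂ)`. -/
def HasFixedPoint (X : Type*) [MulAction H X] (ρ : G →* H) : Prop :=
  ∃ p : X, ∀ g, ρ g • p = p

end Homomorphisms

section Dihedral

open DihedralGroup

variable {n : ℕ} {G : Type*} [Group G]

theorem closure_r_one_sr_zero : Subgroup.closure {r (1 : ZMod n), sr 0} = ⊤ := by
  refine eq_top_iff.2 fun g _ => ?_
  have hr : r 1 ∈ Subgroup.closure {r (1 : ZMod n), sr 0} := Subgroup.subset_closure (by simp)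
  have hs : sr 0 ∈ Subgroup.closure {r (1 : ZMod n), sr 0} := Subgroup.subset_closure (by simp)
  have hri (i : ZMod n) : r i ∈ Subgroup.closure {r (1 : ZMod n), sr 0} := by
    simpa using zpow_mem hr (i.cast : ℤ)
  cases g with
  | r i => exact hri i
  | sr i => simpa using mul_mem hs (hri i)

theorem dihedralHom_ext {ρ σ : DihedralGroup n →* G} (hr : ρ (r 1) = σ (r 1))
    (hs : ρ (sr 0) = σ (sr 0)) : ρ = σ :=
  MonoidHom.eq_of_eqOn_dense closure_r_one_sr_zero (by simp [Set.EqOn, hr, hs])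

theorem dihedralHom_mem {ρ : DihedralGroup n →* G} {S : Subgroup G} (hr : ρ (r 1) ∈ S)
    (hs : ρ (sr 0) ∈ S) (g : DihedralGroup n) : ρ g ∈ S := by
  have hle : Subgroup.closure {r 1, sr 0} ≤ S.comap ρ :=
    (Subgroup.closure_le _).2 (by simp [Set.insert_subset_iff, hr, hs])
  exact hle (closure_r_one_sr_zero ▸ Subgroup.mem_top g)

theorem IsConjHom.of_dihedral {ρ σ : DihedralGroup n →* G} {u : G}
    (hr : σ (r 1) = u * ρ (r 1) * u⁻¹) (hs : σ (sr 0) = u * ρ (sr 0) * u⁻¹) : IsConjHom ρ σ := by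
  have h : σ = (MulAut.conj u).toMonoidHom.comp ρ := dihedralHom_ext hr hs
  exact h ▸ isConjHom_conj_comp u ρ

theorem dihedralHom_sr_zero_mul_self (ρ : DihedralGroup n →* G) : ρ (sr 0) * ρ (sr 0) = 1 := by
  rw [← map_mul, sr_mul_self, map_one]

theorem dihedralHom_r_one_mul_sr_zero (ρ : DihedralGroup n →* G) :
    ρ (r 1) * ρ (sr 0) = ρ (sr 0) * (ρ (r 1))⁻¹ := by
  rw [← map_inv, ← map_mul, ← map_mul, r_mul_sr, inv_r, sr_mul_r, zero_sub, zero_add]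

/-- The homomorphism `i ↦ a ^ i` from the cyclic group of order `n`, for `a ^ n = 1`. -/
def zmodPowersHom (a : G) (ha : a ^ n = 1) : Multiplicative (ZMod n) →* G :=
  AddMonoidHom.toMultiplicativeLeft
    (ZMod.lift n ⟨zmultiplesHom (Additive G) (.ofMul a), by simpa [← ofMul_pow] using ha⟩)

theorem zmodPowersHom_intCast (a : G) (ha : a ^ n = 1) (k : ℤ) :
    zmodPowersHom a ha (.ofAdd (k : ZMod n)) = a ^ k := by
  simp [zmodPowersHom]

theorem zmodPowersHom_mul_eq_mul_inv {a b : G} (ha : a ^ n = 1) (hab : a * b = b * a⁻¹)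
    (i : Multiplicative (ZMod n)) :
    zmodPowersHom a ha i * b = b * (zmodPowersHom a ha i)⁻¹ := by
  obtain ⟨k, rfl⟩ : ∃ k : ℤ, .ofAdd (k : ZMod n) = i := ZMod.intCast_surjective i.toAdd
  rw [zmodPowersHom_intCast, ← inv_zpow]
  exact ((show SemiconjBy b a⁻¹ a from hab.symm).zpow_right k).eq.symm

/-- The universal property of `DihedralGroup n`: the homomorphism with `r 1 ↦ a`, `sr 0 ↦ b`. -/
def dihedralLift (a b : G) (ha : a ^ n = 1) (hb : b * b = 1) (hab : a * b = b * a⁻¹) :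
    DihedralGroup n →* G where
  toFun
    | r i => zmodPowersHom a ha (.ofAdd i)
    | sr i => b * zmodPowersHom a ha (.ofAdd i)
  map_one' := map_one (zmodPowersHom a ha)
  map_mul' x y := by
    have swap := zmodPowersHom_mul_eq_mul_inv ha hab
    have sub (i j : ZMod n) : zmodPowersHom a ha (.ofAdd (j - i)) =
        (zmodPowersHom a ha (.ofAdd i))⁻¹ * zmodPowersHom a ha (.ofAdd j) := by
      rw [sub_eq_neg_add, ofAdd_add, ofAdd_neg, map_mul, map_inv]
    rcases x with i | i <;> rcases y with j | j
    · simp only [r_mul_r, ofAdd_add, map_mul]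
    · simp only [r_mul_sr, sub, ← mul_assoc, swap]
    · simp only [sr_mul_r, ofAdd_add, map_mul, mul_assoc]
    · simp only [sr_mul_sr, sub]
      rw [mul_assoc, ← mul_assoc _ b, swap, mul_assoc b, ← mul_assoc b b, hb, one_mul]

section Lift

variable {a b : G} (ha : a ^ n = 1) (hb : b * b = 1) (hab : a * b = b * a⁻¹)

theorem dihedralLift_r_one : dihedralLift a b ha hb hab (r 1) = a := by
  simpa only [Int.cast_one, zpow_one] using! zmodPowersHom_intCast a ha 1

theorem dihedralLift_sr_zero : dihedralLift a b ha hb hab (sr 0) = b := by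
  change b * zmodPowersHom a ha 1 = b
  rw [map_one, mul_one]

end Lift

variable {X : Type*} [MulAction G X]

theorem hasFixedPoint_of_dihedral {ρ : DihedralGroup n →* G} {p : X} (hr : ρ (r 1) • p = p)
    (hs : ρ (sr 0) • p = p) : HasFixedPoint X ρ :=
  ⟨p, dihedralHom_mem (S := stabilizer G p) hr hs⟩

/-- If `r 1` fixes `p`, it also fixes `sr 0 • p`, because `sr 0` inverts `r 1`. Two-transitivity
then moves the pair `p`, `sr 0 • p` to any other pair of points. -/
theorem exists_isConjHom_fix_swap [IsMultiplyPretransitive G X 2] {ρ : DihedralGroup n →* G}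
    (hρ : ¬ HasFixedPoint X ρ) {p : X} (hp : ρ (r 1) • p = p) {x y : X} (hxy : x ≠ y) :
    ∃ σ, IsConjHom ρ σ ∧ (σ (r 1) • x = x ∧ σ (r 1) • y = y) ∧
      (σ (sr 0) • x = y ∧ σ (sr 0) • y = x) := by
  have hsp : ρ (sr 0) • p ≠ p := fun hs => hρ (hasFixedPoint_of_dihedral hp hs)
  have hrsp : ρ (r 1) • ρ (sr 0) • p = ρ (sr 0) • p := by
    rw [← mul_smul, dihedralHom_r_one_mul_sr_zero, mul_smul, inv_smul_eq_iff.2 hp.symm]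
  have hssp : ρ (sr 0) • ρ (sr 0) • p = p := by
    rw [← mul_smul, dihedralHom_sr_zero_mul_self, one_smul]
  obtain ⟨u, rfl, rfl⟩ := is_two_pretransitive_iff.1 ‹_› hsp.symm hxy
  refine ⟨_, isConjHom_conj_comp u ρ, ?_⟩
  simp [mul_smul, hp, hrsp, hssp]

end Dihedral

section ProjectiveAction

variable {ι K : Type*} [DecidableEq ι] [Field K]

variable (K) in
/-- The `i`-th coordinate point `[e_i]` of projective space; on `ℙ¹`, the points `∞` and `0`. -/
def coordPoint (i : ι) : ℙ K (ι → K) :=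
  .mk K (Pi.single i 1) (by simp)

theorem mk_eq_coordPoint_iff {v : ι → K} (hv : v ≠ 0) {i : ι} :
    .mk K v hv = coordPoint K i ↔ ∀ k ≠ i, v k = 0 := by
  rw [coordPoint, Projectivization.mk_eq_mk_iff']
  constructor
  · rintro ⟨c, rfl⟩ k hk
    simp [hk]
  · refine fun h => ⟨v i, ?_⟩
    ext k
    by_cases hk : k = i <;> simp [hk, h]

theorem coordPoint_injective : Function.Injective (coordPoint K : ι → ℙ K (ι → K)) := by
  intro i j h
  by_contra hij
  simpa using (mk_eq_coordPoint_iff _).1 h i hij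

variable [Fintype ι]

instance isMultiplyPretransitive_projectiveSpecialLinearGroup :
    IsMultiplyPretransitive (Matrix.ProjectiveSpecialLinearGroup ι K) (ℙ K (ι → K)) 2 :=
  is_two_pretransitive_iff.2 fun hab hcd =>
    let ⟨g, hg⟩ := is_two_pretransitive_iff (G := Matrix.SpecialLinearGroup ι K).1
      inferInstance hab hcd
    ⟨g, hg⟩

theorem exists_projectiveSpecialLinearGroup_smul_eq [Nonempty ι] [IsAlgClosed K]
    (g : Matrix.ProjectiveSpecialLinearGroup ι K) : ∃ p : ℙ K (ι → K), g • p = p := by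
  induction g using QuotientGroup.induction_on with | _ A
  obtain ⟨c, hc⟩ := Module.End.exists_eigenvalue (Matrix.toLin' A.1)
  obtain ⟨v, hv⟩ := hc.exists_hasEigenvector
  refine ⟨.mk K v hv.2, (Projectivization.mk_eq_mk_iff' ..).2 ⟨c, ?_⟩⟩
  exact hv.apply_eq_smul.symm

theorem coe_smul_coordPoint_eq_iff (A : Matrix.SpecialLinearGroup ι K) {i j : ι} :
    (A : Matrix.ProjectiveSpecialLinearGroup ι K) • coordPoint K j = coordPoint K i ↔
      ∀ k ≠ i, A k j = 0 := by
  rw [Matrix.ProjectiveSpecialLinearGroup.smul_proj_mk, coordPoint, Projectivization.smul_mk,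
    mk_eq_coordPoint_iff]
  simp [Matrix.SpecialLinearGroup.smul_def]

end ProjectiveAction

section Units

variable {n : ℕ}

theorem units_add_inv_eq_add_inv_iff {R : Type*} [CommRing R] [IsDomain R] {a b : Rˣ} :
    (a : R) + ↑a⁻¹ = b + ↑b⁻¹ ↔ a = b ∨ a = b⁻¹ := by
  have ha : (a : R) * ↑a⁻¹ = 1 := a.mul_inv
  have hb : (b : R) * ↑b⁻¹ = 1 := b.mul_inv
  constructor
  · intro h
    have hprod : ((a : R) - b) * (a - ↑b⁻¹) = 0 := by linear_combination a * h - ha + hb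
    simpa only [mul_eq_zero, sub_eq_zero, Units.val_inj] using hprod
  · rintro (rfl | rfl)
    · rfl
    · rw [inv_inv, add_comm]

theorem exists_units_sq_eq {K : Type*} [Field K] [IsAlgClosed K] (x : Kˣ) :
    ∃ z : Kˣ, z ^ 2 = x := by
  obtain ⟨z, hz⟩ := IsAlgClosed.exists_pow_nat_eq (x : K) two_pos
  have hz0 : z ≠ 0 := ne_zero_pow two_ne_zero (hz ▸ x.ne_zero)
  exact ⟨.mk0 z hz0, Units.ext hz⟩

theorem primitiveRoot_half_powers_injective {M : Type*} [CommGroup M] {ω : M}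
    (hω : IsPrimitiveRoot ω n) {i j : Fin (n / 2)}
    (hij : ω ^ (i + 1 : ℕ) = ω ^ (j + 1 : ℕ) ∨ ω ^ (i + 1 : ℕ) = (ω ^ (j + 1 : ℕ))⁻¹) :
    i = j := by
  have hi := i.2
  have hj := j.2
  ext
  rcases hij with h | h
  · have := hω.pow_inj (by omega) (by omega) h
    omega
  · rw [eq_inv_iff_mul_eq_one, ← pow_add] at h
    have := Nat.le_of_dvd (by omega) (hω.dvd_of_pow_eq_one _ h)
    omega

theorem exists_primitiveRoot_half_power_eq {R : Type*} [CommRing R] [IsDomain R] [NeZero n]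
    {ω ζ : Rˣ} (hω : IsPrimitiveRoot ω n) (hζ : ζ ^ n = 1) (hζ1 : ζ ≠ 1) :
    ∃ i : Fin (n / 2), ζ = ω ^ (i + 1 : ℕ) ∨ ζ = (ω ^ (i + 1 : ℕ))⁻¹ := by
  obtain ⟨k, hk, hkζ⟩ := (IsPrimitiveRoot.coe_units_iff.2 hω).eq_pow_of_pow_eq_one
    (ξ := (ζ : R)) (by rw [← Units.val_pow_eq_pow_val, hζ, Units.val_one])
  obtain rfl : ω ^ k = ζ := by exact_mod_cast hkζ
  have hk0 : k ≠ 0 := by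
    rintro rfl
    exact hζ1 (pow_zero ω)
  rcases le_or_gt k (n / 2) with hkn | hkn
  · refine ⟨⟨k - 1, by omega⟩, .inl (congrArg (ω ^ ·) ?_)⟩
    exact (Nat.sub_add_cancel (Nat.pos_of_ne_zero hk0)).symm
  · refine ⟨⟨n - k - 1, by omega⟩, .inr ?_⟩
    have hsum : k + (n - k - 1 + 1) = n := by omega
    rw [eq_inv_iff_mul_eq_one, ← pow_add, hsum, hω.pow_eq_one]

theorem exists_sq_representatives_rootsOfUnity_mod_inv (K : Type*) [Field K] [IsAlgClosed K] (n : ℕ)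
    [NeZero (n : K)] :
    ∃ z : Fin (n / 2) → Kˣ,
      (∀ i, (z i ^ 2) ^ n = 1 ∧ z i ^ 2 ≠ 1) ∧
      (∀ i j, z i ^ 2 = z j ^ 2 ∨ z i ^ 2 = (z j ^ 2)⁻¹ → i = j) ∧
      ∀ ζ : Kˣ, ζ ^ n = 1 → ζ ≠ 1 → ∃ i, ζ = z i ^ 2 ∨ ζ = (z i ^ 2)⁻¹ := by
  have hn : NeZero n := .of_neZero_natCast K
  obtain ⟨ω₀, hω₀⟩ := HasEnoughRootsOfUnity.exists_primitiveRoot K n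
  obtain ⟨ω, hω⟩ : ∃ ω : Kˣ, IsPrimitiveRoot ω n := ⟨_, hω₀.isUnit_unit (NeZero.ne n)⟩
  choose z hz using fun i : Fin (n / 2) => exists_units_sq_eq (ω ^ (i + 1 : ℕ))
  refine ⟨z, fun i => ⟨?_, ?_⟩, fun i j hij => ?_, fun ζ hζ hζ1 => ?_⟩
  · rw [hz, pow_right_comm, hω.pow_eq_one, one_pow]
  · rw [hz]
    exact hω.pow_ne_one_of_pos_of_lt (by omega) (by omega)
  · rw [hz, hz] at hij
    exact primitiveRoot_half_powers_injective hω hij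
  · simpa only [hz] using exists_primitiveRoot_half_power_eq hω hζ hζ1

end Units

section TraceSq

open Matrix Matrix.SpecialLinearGroup

variable {R : Type*} [CommRing R]

/-- The squared trace, which is well defined on `PSL₂` because scalars in `SL₂` square to `1`. -/
def pslTraceSq : PSL(2, R) → R :=
  Quotient.lift (fun A : SL(2, R) => A.1.trace ^ 2) fun A B hAB => by
    obtain ⟨c, hc, hcAB⟩ := mem_center_iff.1 (QuotientGroup.leftRel_apply.1 hAB)
    have hB : B.1 = A.1 * scalar (Fin 2) c := by
      rw [hcAB, ← coe_mul, mul_inv_cancel_left]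
    rw [Fintype.card_fin] at hc
    simp only [hB, scalar_apply, trace_fin_two, mul_diagonal, ← add_mul, mul_pow, hc, mul_one]

theorem pslTraceSq_conj (u g : PSL(2, R)) : pslTraceSq (u * g * u⁻¹) = pslTraceSq g := by
  induction u using QuotientGroup.induction_on with | _ U
  induction g using QuotientGroup.induction_on with | _ A
  change (U * A * U⁻¹).1.trace ^ 2 = A.1.trace ^ 2
  rw [coe_mul, coe_mul, trace_mul_cycle, ← coe_mul, inv_mul_cancel, coe_one, one_mul]

end TraceSq

section PSL2

variable {K : Type*} [Field K]

local notation "∞" => coordPoint K (0 : Fin 2)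
local notation "𝟎" => coordPoint K (1 : Fin 2)

theorem coordPoint_zero_ne_one : ∞ ≠ 𝟎 :=
  coordPoint_injective.ne zero_ne_one

variable (K) in
/-- The group `N` of classes of monomial matrices, encoded as the setwise stabilizer of `{∞, 0}`. -/
def monomialSubgroup : Subgroup PSL(2, K) :=
  stabilizer PSL(2, K) ({∞, 𝟎} : Set (ℙ K (Fin 2 → K)))

theorem mem_monomialSubgroup_iff {g : PSL(2, K)} :
    g ∈ monomialSubgroup K ↔ (g • ∞ = ∞ ∧ g • 𝟎 = 𝟎) ∨ (g • ∞ = 𝟎 ∧ g • 𝟎 = ∞) := by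
  rw [monomialSubgroup, mem_stabilizer_iff, Set.smul_set_insert, Set.smul_set_singleton,
    Set.pair_eq_pair_iff]

theorem coe_fixes_coordPoints_iff (A : SL(2, K)) :
    ((A : PSL(2, K)) • ∞ = ∞ ∧ (A : PSL(2, K)) • 𝟎 = 𝟎) ↔ A 0 1 = 0 ∧ A 1 0 = 0 := by
  simp [coe_smul_coordPoint_eq_iff, and_comm]

theorem coe_swaps_coordPoints_iff (A : SL(2, K)) :
    ((A : PSL(2, K)) • ∞ = 𝟎 ∧ (A : PSL(2, K)) • 𝟎 = ∞) ↔ A 0 0 = 0 ∧ A 1 1 = 0 := by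
  simp [coe_smul_coordPoint_eq_iff]

open Matrix.SpecialLinearGroup in
/-- The torus of `SL₂`, with `z` acting as `diag(z, z⁻¹)`. -/
def slTorus : Kˣ →* SL(2, K) where
  toFun z := diag2 (z : K) z.ne_zero
  map_one' := by
    ext i j
    fin_cases i <;> fin_cases j <;> simp [diag2_coe']
  map_mul' z w := by
    ext i j
    fin_cases i <;> fin_cases j <;> simp [diag2_coe', mul_comm]

theorem coe_slTorus (z : Kˣ) : (slTorus z).1 = !![(z : K), 0; 0, (z : K)⁻¹] :=
  Matrix.SpecialLinearGroup.diag2_coe' z.ne_zero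

/-- The image in `PSL₂` of the diagonal torus. -/
def pslTorus : Kˣ →* PSL(2, K) :=
  (QuotientGroup.mk' _).comp slTorus

theorem pslTorus_eq_one_iff {z : Kˣ} : pslTorus z = 1 ↔ z ^ 2 = 1 := by
  change ((slTorus z : SL(2, K)) : PSL(2, K)) = 1 ↔ _
  rw [QuotientGroup.eq_one_iff, Matrix.SpecialLinearGroup.mem_center_iff, coe_slTorus,
    Units.ext_iff]
  constructor
  · rintro ⟨c, hc, h⟩
    have hcz : c = z := by simpa using congrFun₂ h 0 0
    simpa [← hcz] using hc
  · intro hz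
    have hz' : (z : K) = (z : K)⁻¹ := eq_inv_of_mul_eq_one_left (by simpa [sq] using hz)
    refine ⟨z, by simpa using hz, ?_⟩
    ext i j
    fin_cases i <;> fin_cases j <;> simp [← hz']

theorem pslTorus_eq_iff {z w : Kˣ} : pslTorus z = pslTorus w ↔ z ^ 2 = w ^ 2 := by
  rw [← div_eq_one, ← map_div, pslTorus_eq_one_iff, div_pow, div_eq_one]

theorem pslTorus_fixes_coordPoints (z : Kˣ) :
    (pslTorus z : PSL(2, K)) • ∞ = ∞ ∧ (pslTorus z : PSL(2, K)) • 𝟎 = 𝟎 :=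
  (coe_fixes_coordPoints_iff (slTorus z)).2 (by simp [coe_slTorus])

theorem exists_pslTorus_eq {g : PSL(2, K)} (hg : g • ∞ = ∞ ∧ g • 𝟎 = 𝟎) :
    ∃ z, pslTorus z = g := by
  induction g using QuotientGroup.induction_on with | _ A
  obtain ⟨h01, h10⟩ := (coe_fixes_coordPoints_iff A).1 hg
  have hdet : A 0 0 * A 1 1 = 1 := by
    simpa [h01] using (Matrix.det_fin_two A.1).symm
  refine ⟨.mkOfMulEqOne _ _ hdet, congrArg QuotientGroup.mk (?_ : slTorus _ = A)⟩
  ext i j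
  rw [coe_slTorus]
  fin_cases i <;> fin_cases j <;> simp [h01, h10, inv_eq_of_mul_eq_one_right hdet]

theorem eq_coordPoint_of_pslTorus_smul_eq {z : Kˣ} (hz : z ^ 2 ≠ 1) {p : ℙ K (Fin 2 → K)}
    (hp : (pslTorus z : PSL(2, K)) • p = p) : p = ∞ ∨ p = 𝟎 := by
  induction p using Projectivization.ind with | _ v hv
  obtain ⟨c, hc⟩ := (Projectivization.mk_eq_mk_iff' ..).1 hp
  replace hc : c • v = (slTorus z).1.mulVec v := hc
  have h0 : c = z ∨ v 0 = 0 := by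
    simpa [coe_slTorus, Matrix.mulVec, dotProduct] using congrFun hc 0
  have h1 : c = (z : K)⁻¹ ∨ v 1 = 0 := by
    simpa [coe_slTorus, Matrix.mulVec, dotProduct] using congrFun hc 1
  have hz' : (z : K) ≠ (z : K)⁻¹ := fun h => hz <| by
    rw [sq, ← eq_inv_iff_mul_eq_one]
    exact Units.ext (by simpa using h)
  have hv01 : v 0 = 0 ∨ v 1 = 0 := by
    by_contra! hv01
    exact hz' ((h0.resolve_right hv01.1).symm.trans (h1.resolve_right hv01.2))
  simpa [mk_eq_coordPoint_iff, or_comm] using hv01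

/-- The Weyl element of `SL₂`, acting on `ℙ¹` as `t ↦ -t⁻¹`. -/
def slWeyl : SL(2, K) :=
  ⟨!![0, 1; -1, 0], by simp⟩

theorem coe_slWeyl : (slWeyl : SL(2, K)).1 = !![0, 1; -1, 0] :=
  rfl

/-- The image in `PSL₂` of the Weyl element. -/
def pslWeyl : PSL(2, K) :=
  (slWeyl : SL(2, K))

theorem pslWeyl_swaps_coordPoints :
    (pslWeyl : PSL(2, K)) • ∞ = 𝟎 ∧ (pslWeyl : PSL(2, K)) • 𝟎 = ∞ :=
  (coe_swaps_coordPoints_iff slWeyl).2 (by simp [coe_slWeyl])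

theorem pslWeyl_mul_self : (pslWeyl * pslWeyl : PSL(2, K)) = 1 := by
  refine (QuotientGroup.eq_one_iff (slWeyl * slWeyl)).2
    (Matrix.SpecialLinearGroup.mem_center_iff.2 ⟨-1, by simp, ?_⟩)
  ext i j
  fin_cases i <;> fin_cases j <;> simp [coe_slWeyl]

theorem pslTorus_mul_pslWeyl (z : Kˣ) :
    (pslTorus z * pslWeyl : PSL(2, K)) = pslWeyl * (pslTorus z)⁻¹ := by
  rw [← map_inv]
  refine congrArg QuotientGroup.mk (?_ : slTorus z * slWeyl = slWeyl * slTorus z⁻¹)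
  ext i j
  fin_cases i <;> fin_cases j <;> simp [coe_slTorus, coe_slWeyl]

theorem exists_conj_eq_pslWeyl [IsAlgClosed K] {g : PSL(2, K)} (hg : g • ∞ = 𝟎 ∧ g • 𝟎 = ∞) :
    ∃ u, pslTorus u * g * (pslTorus u)⁻¹ = pslWeyl := by
  obtain ⟨b, hb⟩ := exists_pslTorus_eq (g := g * pslWeyl) <| by
    simp only [mul_smul, pslWeyl_swaps_coordPoints, hg, and_self]
  obtain ⟨u, hu⟩ := exists_units_sq_eq b⁻¹
  refine ⟨u, ?_⟩
  calc pslTorus u * g * (pslTorus u)⁻¹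
      = pslTorus u * (pslTorus b * (pslWeyl * (pslTorus u)⁻¹)) := by
        simp only [hb, mul_assoc, ← mul_assoc pslWeyl pslWeyl, pslWeyl_mul_self, one_mul]
    _ = pslTorus (u ^ 2 * b) * pslWeyl := by
        rw [← pslTorus_mul_pslWeyl, ← mul_assoc, ← mul_assoc, ← map_mul, ← map_mul, sq,
          mul_right_comm]
    _ = pslWeyl := by rw [hu, inv_mul_cancel, map_one, one_mul]

theorem pslTraceSq_pslTorus (z : Kˣ) :
    pslTraceSq (pslTorus z : PSL(2, K)) = ↑(z ^ 2) + ↑(z ^ 2)⁻¹ + 2 := by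
  have hz : (z : K) * (z : K)⁻¹ = 1 := mul_inv_cancel₀ z.ne_zero
  change (slTorus z).1.trace ^ 2 = _
  rw [coe_slTorus, Matrix.trace_fin_two_of, Units.val_inv_eq_inv_val, Units.val_pow_eq_pow_val]
  linear_combination 2 * hz

theorem pslTraceSq_pslTorus_eq_iff {z w : Kˣ} :
    pslTraceSq (pslTorus z : PSL(2, K)) = pslTraceSq (pslTorus w) ↔
      z ^ 2 = w ^ 2 ∨ z ^ 2 = (w ^ 2)⁻¹ := by
  rw [pslTraceSq_pslTorus, pslTraceSq_pslTorus, add_left_inj, units_add_inv_eq_add_inv_iff]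

section StandardRepresentations

open DihedralGroup

variable {n : ℕ}

/-- The representation `r 1 ↦ diag(z, z⁻¹)`, `sr 0 ↦` Weyl element of the dihedral group. -/
def stdDihedralRep (z : Kˣ) (hz : (z ^ 2) ^ n = 1) : DihedralGroup n →* PSL(2, K) :=
  dihedralLift (pslTorus z) pslWeyl
    (by rwa [← map_pow, pslTorus_eq_one_iff, pow_right_comm]) pslWeyl_mul_self
    (pslTorus_mul_pslWeyl z)

variable {z : Kˣ} (hz : (z ^ 2) ^ n = 1)

theorem stdDihedralRep_r_one : stdDihedralRep z hz (r 1) = pslTorus z :=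
  dihedralLift_r_one ..

theorem stdDihedralRep_sr_zero : stdDihedralRep z hz (sr 0) = pslWeyl :=
  dihedralLift_sr_zero ..

theorem stdDihedralRep_mem_monomialSubgroup (g : DihedralGroup n) :
    stdDihedralRep z hz g ∈ monomialSubgroup K := by
  refine dihedralHom_mem ?_ ?_ g <;> rw [mem_monomialSubgroup_iff]
  · rw [stdDihedralRep_r_one]
    exact .inl (pslTorus_fixes_coordPoints z)
  · rw [stdDihedralRep_sr_zero]
    exact .inr pslWeyl_swaps_coordPoints

theorem not_hasFixedPoint_stdDihedralRep (hz1 : z ^ 2 ≠ 1) :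
    ¬ HasFixedPoint (ℙ K (Fin 2 → K)) (stdDihedralRep z hz) := by
  rintro ⟨p, hp⟩
  have hr := hp (r 1)
  have hs := hp (sr 0)
  rw [stdDihedralRep_r_one] at hr
  rw [stdDihedralRep_sr_zero] at hs
  rcases eq_coordPoint_of_pslTorus_smul_eq hz1 hr with rfl | rfl
  · exact coordPoint_zero_ne_one (hs.symm.trans pslWeyl_swaps_coordPoints.1)
  · exact coordPoint_zero_ne_one (pslWeyl_swaps_coordPoints.2.symm.trans hs)

theorem isConjHom_stdDihedralRep_iff {w : Kˣ} (hw : (w ^ 2) ^ n = 1) :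
    IsConjHom (stdDihedralRep z hz) (stdDihedralRep w hw) ↔
      z ^ 2 = w ^ 2 ∨ z ^ 2 = (w ^ 2)⁻¹ := by
  constructor
  · rintro ⟨u, hu⟩
    rw [← pslTraceSq_pslTorus_eq_iff, ← stdDihedralRep_r_one hz, ← stdDihedralRep_r_one hw, hu,
      pslTraceSq_conj]
  · rintro (h | h)
    · refine .of_dihedral (u := 1) ?_ ?_
      · simp [stdDihedralRep_r_one, pslTorus_eq_iff, h]
      · simp [stdDihedralRep_sr_zero]
    · have hzw : pslTorus z = (pslTorus w)⁻¹ := by rw [← map_inv, pslTorus_eq_iff, h, inv_pow]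
      refine .of_dihedral (u := pslWeyl) ?_ ?_
      · rw [stdDihedralRep_r_one, stdDihedralRep_r_one, hzw, ← pslTorus_mul_pslWeyl,
          mul_inv_cancel_right]
      · simp [stdDihedralRep_sr_zero]

theorem exists_isConjHom_stdDihedralRep [IsAlgClosed K] {ρ : DihedralGroup n →* PSL(2, K)}
    (hρ : ¬ HasFixedPoint (ℙ K (Fin 2 → K)) ρ) :
    ∃ (z : Kˣ) (hz : (z ^ 2) ^ n = 1), z ^ 2 ≠ 1 ∧ IsConjHom ρ (stdDihedralRep z hz) := by
  obtain ⟨p, hp⟩ := exists_projectiveSpecialLinearGroup_smul_eq (ρ (r 1))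
  obtain ⟨σ, ⟨v, hv⟩, hfix, hswap⟩ := exists_isConjHom_fix_swap hρ hp coordPoint_zero_ne_one
  obtain ⟨z, hz⟩ := exists_pslTorus_eq hfix
  obtain ⟨u, hu⟩ := exists_conj_eq_pslWeyl hswap
  have hzn : (z ^ 2) ^ n = 1 := by
    rw [pow_right_comm, ← pslTorus_eq_one_iff, map_pow, hz, ← map_pow, r_one_pow_n, map_one]
  have hz1 : z ^ 2 ≠ 1 := fun hz1 => by
    have hr : ρ (r 1) = 1 := by
      rwa [← pslTorus_eq_one_iff, hz, hv, conj_eq_one_iff] at hz1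
    obtain ⟨q, hq⟩ := exists_projectiveSpecialLinearGroup_smul_eq (ρ (sr 0))
    exact hρ (hasFixedPoint_of_dihedral (p := q) (by rw [hr, one_smul]) hq)
  refine ⟨z, hzn, hz1, .trans ⟨v, hv⟩ (.of_dihedral (u := pslTorus u) ?_ ?_)⟩
  · rw [stdDihedralRep_r_one, ← hz, ← map_mul, mul_comm u, map_mul, mul_inv_cancel_right]
  · rw [stdDihedralRep_sr_zero, hu]

theorem isConjHom_iff_pslTraceSq_eq [IsAlgClosed K] {ρ σ : DihedralGroup n →* PSL(2, K)}
    (hρ : ¬ HasFixedPoint (ℙ K (Fin 2 → K)) ρ) (hσ : ¬ HasFixedPoint (ℙ K (Fin 2 → K)) σ) :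
    IsConjHom ρ σ ↔ pslTraceSq (ρ (r 1)) = pslTraceSq (σ (r 1)) := by
  constructor
  · rintro ⟨u, hu⟩
    rw [hu, pslTraceSq_conj]
  · intro h
    obtain ⟨z, hz, -, u, hu⟩ := exists_isConjHom_stdDihedralRep hρ
    obtain ⟨w, hw, -, v, hv⟩ := exists_isConjHom_stdDihedralRep hσ
    have hzw : z ^ 2 = w ^ 2 ∨ z ^ 2 = (w ^ 2)⁻¹ := by
      rw [← pslTraceSq_pslTorus_eq_iff, ← stdDihedralRep_r_one hz, ← stdDihedralRep_r_one hw, hu,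
        hv, pslTraceSq_conj, pslTraceSq_conj, h]
    exact .trans ⟨u, hu⟩ (((isConjHom_stdDihedralRep_iff hz hw).2 hzw).trans (.symm ⟨v, hv⟩))

end StandardRepresentations

end PSL2

theorem dihedral_irreps_PSL2_general {K : Type*} [Field K] [IsAlgClosed K] (n : ℕ)
    [NeZero (n : K)] :
    (∀ ρ : DihedralGroup n →* PSL(2, K), ¬ HasFixedPoint (ℙ K (Fin 2 → K)) ρ →
      ∃ σ : DihedralGroup n →* PSL(2, K), IsConjHom ρ σ ∧ ∀ g, σ g ∈ monomialSubgroup K) ∧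
    (∃ f : Fin (n / 2) → (DihedralGroup n →* PSL(2, K)),
      (∀ i, ¬ HasFixedPoint (ℙ K (Fin 2 → K)) (f i)) ∧
      (∀ i i', IsConjHom (f i) (f i') → i = i') ∧
      (∀ ρ : DihedralGroup n →* PSL(2, K), ¬ HasFixedPoint (ℙ K (Fin 2 → K)) ρ →
        ∃ i, IsConjHom ρ (f i))) ∧
    (∀ ρ σ : DihedralGroup n →* PSL(2, K), ¬ HasFixedPoint (ℙ K (Fin 2 → K)) ρ →
      ¬ HasFixedPoint (ℙ K (Fin 2 → K)) σ →
      (IsConjHom ρ σ ↔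
        pslTraceSq (ρ (DihedralGroup.r 1)) = pslTraceSq (σ (DihedralGroup.r 1)))) := by
  refine ⟨fun ρ hρ => ?_, ?_, fun ρ σ => isConjHom_iff_pslTraceSq_eq⟩
  · obtain ⟨z, hz, -, hconj⟩ := exists_isConjHom_stdDihedralRep hρ
    exact ⟨_, hconj, stdDihedralRep_mem_monomialSubgroup hz⟩
  · obtain ⟨z, hz, hz_inj, hz_surj⟩ := exists_sq_representatives_rootsOfUnity_mod_inv K n
    refine ⟨fun i => stdDihedralRep (z i) (hz i).1,
      fun i => not_hasFixedPoint_stdDihedralRep _ (hz i).2,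
      fun i j hij => hz_inj i j ((isConjHom_stdDihedralRep_iff _ _).1 hij), fun ρ hρ => ?_⟩
    obtain ⟨w, hw, hw1, hconj⟩ := exists_isConjHom_stdDihedralRep hρ
    obtain ⟨i, hi⟩ := hz_surj _ hw hw1
    exact ⟨i, hconj.trans ((isConjHom_stdDihedralRep_iff _ _).2 hi)⟩

section ComplexNumbers

variable {n : ℕ}

theorem isRedRep_iff_hasFixedPoint {ρ : DihedralGroup n →* PSL2C} :
    IsRedRep ρ ↔ HasFixedPoint (ℙ ℂ (Fin 2 → ℂ)) ρ := by
  constructor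
  · rintro ⟨v, hv, h⟩
    refine ⟨.mk ℂ v hv, fun g => ?_⟩
    obtain ⟨A, c, hA, hc⟩ := h g
    rw [← hA]
    exact (Projectivization.mk_eq_mk_iff' ..).2 ⟨c, hc.symm⟩
  · rintro ⟨p, hp⟩
    induction p using Projectivization.ind with | _ v hv
    refine ⟨v, hv, fun g => ?_⟩
    obtain ⟨A, hA⟩ := QuotientGroup.mk_surjective (ρ g)
    obtain ⟨c, hc⟩ := (Projectivization.mk_eq_mk_iff' ..).1 (hA ▸ hp g)
    exact ⟨A, c, hA, hc.symm⟩

theorem memN_iff_mem_monomialSubgroup {g : PSL2C} : MemN g ↔ g ∈ monomialSubgroup ℂ := by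
  rw [mem_monomialSubgroup_iff]
  constructor
  · rintro (⟨A, rfl, hA⟩ | ⟨A, rfl, hA⟩)
    exacts [.inl ((coe_fixes_coordPoints_iff A).2 hA), .inr ((coe_swaps_coordPoints_iff A).2 hA)]
  · induction g using QuotientGroup.induction_on with | _ A
    rintro (hA | hA)
    exacts [.inl ⟨A, rfl, (coe_fixes_coordPoints_iff A).1 hA⟩,
      .inr ⟨A, rfl, (coe_swaps_coordPoints_iff A).1 hA⟩]

theorem pslTraceSq_eq_iff_forall_lifts {g h : PSL2C} :
    pslTraceSq g = pslTraceSq h ↔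
      ∀ A B : SL2C, (QuotientGroup.mk A : PSL2C) = g → (QuotientGroup.mk B : PSL2C) = h →
        A.1.trace ^ 2 = B.1.trace ^ 2 := by
  constructor
  · rintro hgh A B rfl rfl
    exact hgh
  · induction g using QuotientGroup.induction_on with | _ A
    induction h using QuotientGroup.induction_on with | _ B
    exact fun hAB => hAB A B rfl rfl

end ComplexNumbers

/-- For `n ≥ 3`: every irreducible representation `D_n → PSL₂(ℂ)` is conjugate to one
with image in `N`; up to conjugation there are exactly `⌊n/2⌋` irreducible
representations; and irreducible representations are distinguished up to conjugacy by
the value `trace²` at the rotation `xy = r 1`. -/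
theorem dihedral_irreps_PSL2 (n : ℕ) (hn : 3 ≤ n) :
    (∀ ρ : DihedralGroup n →* PSL2C, ¬ IsRedRep ρ →
      ∃ σ : DihedralGroup n →* PSL2C, RepConj ρ σ ∧ ∀ g, MemN (σ g)) ∧
    (∃ f : Fin (n / 2) → (DihedralGroup n →* PSL2C),
      (∀ i, ¬ IsRedRep (f i)) ∧
      (∀ i i', RepConj (f i) (f i') → i = i') ∧
      (∀ ρ : DihedralGroup n →* PSL2C, ¬ IsRedRep ρ → ∃ i, RepConj ρ (f i))) ∧
    (∀ ρ σ : DihedralGroup n →* PSL2C, ¬ IsRedRep ρ → ¬ IsRedRep σ →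
      (RepConj ρ σ ↔ ∀ A B : SL2C,
        (QuotientGroup.mk A : PSL2C) = ρ (DihedralGroup.r 1) →
        (QuotientGroup.mk B : PSL2C) = σ (DihedralGroup.r 1) →
        (Matrix.trace A.1) ^ 2 = (Matrix.trace B.1) ^ 2)) := by
  have : NeZero (n : ℂ) := ⟨by exact_mod_cast (by omega : n ≠ 0)⟩
  simp only [isRedRep_iff_hasFixedPoint, memN_iff_mem_monomialSubgroup,
    ← pslTraceSq_eq_iff_forall_lifts]
  exact dihedral_irreps_PSL2_general n

end
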